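/- Fix integers m ≥ 1 and k ≥ 1. Let N'_{m,k}(α,β) be the sum of wt(T) over all Condensed Catalan tableaux T of size (k, k+m) whose shape λ = (λ_1,…,λ_k) satisfies λ_1 = m and λ_k ≥ 1 (first row of length exactly m and exactly k nonzero rows). Then N'_{m,k}(α,β) = α^k β^m Σ_{ℓ=0}^{k} Σ_{j=0}^{m} α^j β^ℓ ( binom(m+ℓ−2+δ_{jm}, m−1)·binom(k+j−2+δ_{ℓk}, k−1) − binom(m+ℓ−2+δ_{jm}, m)·binom(k+j−2+δ_{ℓk}, k) ), where δ_{rs} is the Kronecker delta and binom(a,b) = 0 whenever b < 0 or b > a, the identity holding in ℤ[α,β]. -/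

import Mathlib

open scoped Classical
open Finset

/-- A Condensed Catalan tableau with `k` rows inside a rectangle of width `w`,
of shape `lam`: cells are `none` (empty), `some true` (an α) or `some false` (a β). -/
def IsCCT (k w : ℕ) (lam : Fin k → ℕ) (F : Fin k → Fin w → Option Bool) : Prop :=
  (∀ (i : Fin k) (c : Fin w), lam i ≤ (c : ℕ) → F i c = none) ∧
  (∀ (i : Fin k) (c c' : Fin w), F i c = some false → c' < c → F i c' = none) ∧
  (∀ (i i' : Fin k) (c : Fin w), F i c = some true → i' < i → F i' c = none) ∧
  (∀ (i : Fin k) (c : Fin w), (c : ℕ) < lam i →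
    (∀ i' : Fin k, i < i' → F i' c ≠ some true) →
    (∀ c' : Fin w, c < c' → (c' : ℕ) < lam i → F i c' ≠ some false) →
    F i c ≠ none)

/-- The number of α's in the filling. -/
def aCount (k w : ℕ) (F : Fin k → Fin w → Option Bool) : ℕ :=
  (Finset.univ.filter fun p : Fin k × Fin w => F p.1 p.2 = some true).card

/-- The number of β's in the filling. -/
def bCount (k w : ℕ) (F : Fin k → Fin w → Option Bool) : ℕ :=
  (Finset.univ.filter fun p : Fin k × Fin w => F p.1 p.2 = some false).card

/-- The binomial coefficient `binom a b` for integer arguments, with the convention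
that it vanishes whenever `b < 0` or `b > a`. -/
def icho (a b : ℤ) : ℤ := if 0 ≤ b ∧ b ≤ a then ((a.toNat).choose b.toNat : ℤ) else 0


theorem icho_pascal (a b : ℤ) (h : a ≠ -1 ∨ b ≠ -1) :
    icho (a + 1) (b + 1) = icho a b + icho a (b + 1) := by
  rcases lt_or_ge b (-1) with hb | hb
  · unfold icho
    rw [if_neg (by omega), if_neg (by omega), if_neg (by omega)]; simp
  rcases lt_or_ge a (-1) with ha | ha
  · unfold icho
    rw [if_neg (by omega), if_neg (by omega), if_neg (by omega)]; simp
  rcases eq_or_lt_of_le ha with ha | ha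
  · unfold icho
    rw [if_neg (by omega), if_neg (by omega), if_neg (by omega)]; simp
  rcases eq_or_lt_of_le hb with hb | hb
  · subst hb
    unfold icho
    rw [if_pos (by omega), if_neg (by omega), if_pos (by omega)]; simp
  obtain ⟨n, rfl⟩ : ∃ n : ℕ, a = n := ⟨a.toNat, by omega⟩
  obtain ⟨p, rfl⟩ : ∃ n : ℕ, b = n := ⟨b.toNat, by omega⟩
  have key : ∀ x y : ℕ, icho (x : ℤ) (y : ℤ) = (x.choose y : ℤ) := by
    intro x y
    unfold icho
    split_ifs with h
    · simp
    · rw [Nat.choose_eq_zero_of_lt (by omega)]; simp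
  have := key (n+1) (p+1)
  have h2 := key n (p+1)
  push_cast at this h2
  rw [this, h2, key, Nat.choose_succ_succ]
  push_cast; rfl

theorem icho_symm (a b : ℤ) : icho a b = icho a (a - b) := by
  unfold icho
  by_cases h : 0 ≤ b ∧ b ≤ a
  · rw [if_pos h, if_pos (by omega)]
    rw [← Nat.choose_symm (show b.toNat ≤ a.toNat by omega)]
    congr 2; omega
  · rw [if_neg h, if_neg (by omega)]

theorem icho_zero (a b : ℤ) (h : b < 0 ∨ a < b) : icho a b = 0 := by
  unfold icho; rw [if_neg (by omega)]

theorem icho_one (a b : ℤ) (ha : 0 ≤ a) (h : b = 0 ∨ a = b) : icho a b = 1 := by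
  unfold icho
  rw [if_pos (by omega)]
  rcases h with rfl | rfl <;> simp

def Fc (k m j l : ℕ) : ℤ :=
  icho ((m : ℤ) + (l : ℤ) - 2 + (if j = m then 1 else 0)) ((m : ℤ) - 1) *
              icho ((k : ℤ) + (j : ℤ) - 2 + (if l = k then 1 else 0)) ((k : ℤ) - 1) -
            icho ((m : ℤ) + (l : ℤ) - 2 + (if j = m then 1 else 0)) (m : ℤ) *
              icho ((k : ℤ) + (j : ℤ) - 2 + (if l = k then 1 else 0)) (k : ℤ)

theorem Fc_m_zero (k l : ℕ) (hk : 1 ≤ k) : Fc k 0 0 l = 0 := by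
  unfold Fc
  rw [icho_zero _ ((0:ℕ) - 1 : ℤ) (by left; simp), icho_zero _ (k : ℤ) (by right; split_ifs <;> push_cast <;> omega)]
  ring

theorem Fc_l_zero (k m j : ℕ) (hk : 1 ≤ k) (hj : j < m) : Fc k m j 0 = 0 := by
  unfold Fc
  rw [if_neg (by omega), icho_zero _ (m - 1 : ℤ) (by right; simp),
    icho_zero _ (m : ℤ) (by right; simp)]
  ring

theorem Fc_diag (k m : ℕ) : Fc k m m k = 0 := by
  unfold Fc
  rw [if_pos rfl, if_pos rfl, icho_symm _ (m - 1 : ℤ), icho_symm _ (m : ℤ)]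
  rw [show (m + k - 2 + 1 - (m - 1) : ℤ) = k by ring, show (m + k - 2 + 1 - m : ℤ) = k - 1 by ring,
    show (k + m - 2 + 1  : ℤ) = m + k - 2 + 1 by ring]
  ring

theorem row_sum (k m l j : ℕ) (hk : 1 ≤ k) (hj : j < m) :
    ∑ i ∈ range (j + 1), Fc k m i l =
      icho ((m : ℤ) + l - 2) (m - 1) * icho (k + j - 1 + (if l = k then 1 else 0)) k
      - icho ((m : ℤ) + l - 2) m * icho (k + j - 1 + (if l = k then 1 else 0)) (k + 1) := by
  induction j with
  | zero =>
    simp only [zero_add, sum_range_one, Fc]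
    rw [if_neg (by omega)]
    have h1 := icho_pascal ((k:ℤ) - 2 + (if l = k then 1 else 0)) (k - 1) (by right; omega)
    have h2 := icho_pascal ((k:ℤ) - 2 + (if l = k then 1 else 0)) k (by right; omega)
    have h3 := icho_zero ((k:ℤ) - 2 + (if l = k then 1 else 0)) k (by split_ifs <;> omega)
    have h4 := icho_zero ((k:ℤ) - 2 + (if l = k then 1 else 0)) (k+1) (by split_ifs <;> omega)
    rw [show (k:ℤ) - 2 + (if l = k then 1 else 0) + 1 = k - 1 + (if l = k then 1 else 0) by ring] at h1 h2
    rw [show (k:ℤ) - 1 + 1 = k by ring] at h1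
    simp only [Nat.cast_zero, add_zero]
    rw [h1, h2, h3, h4]; ring
  | succ j ih =>
    rw [sum_range_succ, ih (by omega), Fc, if_neg (show ¬ (j + 1 = m) by omega)]
    have h1 := icho_pascal ((k:ℤ) + j - 1 + (if l = k then 1 else 0)) (k - 1) (by right; omega)
    have h2 := icho_pascal ((k:ℤ) + j - 1 + (if l = k then 1 else 0)) k (by right; omega)
    rw [show (k:ℤ) + j - 1 + (if l = k then 1 else 0) + 1 = k + j + (if l = k then 1 else 0) by ring] at h1 h2
    rw [show (k:ℤ) - 1 + 1 = k by ring] at h1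
    push_cast
    rw [show (k:ℤ) + (j + 1) - 2 + (if l = k then 1 else 0) = k + j - 1 + (if l = k then 1 else 0) by ring,
     show (k:ℤ) + (j + 1) - 1 + (if l = k then 1 else 0) = k + j + (if l = k then 1 else 0) by ring,
     h1, h2]
    ring

theorem stepA (k m j l : ℕ) (hk : 1 ≤ k) (hj : j < m) (hl : l ≤ k) :
    Fc (k+1) m j (l+1) + ∑ i ∈ range (j + 1), Fc k (m+1) i l = Fc (k+1) (m+1) j (l+1) := by
  rw [row_sum k _ l j hk (by omega)]
  unfold Fc
  rw [if_neg (show ¬ (j = m) by omega), if_neg (show ¬ (j = m + 1) by omega)]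
  simp only [Nat.add_right_cancel_iff]
  have h1 := icho_pascal ((m:ℤ) + l - 1) (m - 1) (by right; omega)
  have h2 := icho_pascal ((m:ℤ) + l - 1) m (by right; omega)
  rw [show (m:ℤ) - 1 + 1 = m by ring] at h1
  push_cast
  ring_nf at h1 h2 ⊢
  rw [h1, h2]; ring

 
theorem stepB (k m l : ℕ) (hk : 1 ≤ k) (hl : l ≤ k) :
    Fc (k+1) m m l + ∑ i ∈ range (m + 1), Fc k (m+1) i l = Fc (k+1) (m+1) m (l+1) := by
  rw [row_sum k _ l m hk (by omega)]
  unfold Fc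
  rw [if_pos rfl, if_neg (show ¬ (l = k + 1) by omega), if_neg (show ¬ (m = m + 1) by omega)]
  simp only [Nat.add_right_cancel_iff]
  have h2 := icho_pascal ((m:ℤ) + l - 1) m (by right; omega)
  have h1 : (icho (m + l - 1 + 1) m - (icho (m + l - 1) (m - 1) + icho (m + l - 1) m)) * 
     icho (k + m - 1 + (if l = k then 1 else 0)) k = 0 := by
    by_cases h : m = 0 ∧ l = 0
    · rw [icho_zero _ (k:ℤ)]
      · ring
      · right; rw [if_neg (by omega)]; omega
    · have h1 := icho_pascal ((m:ℤ) + l - 1) (m - 1) (by omega)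
      rw [show (m:ℤ) - 1 + 1 = m by ring] at h1
      rw [h1]; ring
  by_cases hlk : l = k
  · subst hlk
    simp only [if_true] at *
    have h3 := icho_pascal ((m:ℤ) + l - 1) (l - 1) (by omega)
    have h4 := icho_pascal ((m:ℤ) + l - 1) l (by omega)
    have s1 := icho_symm ((m:ℤ) + l - 1) (m-1)
    have s2 := icho_symm ((m:ℤ) + l - 1) m
    push_cast
    ring_nf at h1 h2 h3 h4 s1 s2 ⊢
    simp only [h2, h3, h4, s1, s2] at h1 ⊢
    linear_combination -h1
  · simp only [if_neg hlk] at *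
    push_cast
    ring_nf at h1 h2 ⊢
    simp only [h2]
    linear_combination -h1

theorem stepC (k m l : ℕ) (hk : 1 ≤ k) (hl : l ≤ k) :
    Fc (k+1) (m+1) m (l+1) + Fc k (m+1) (m+1) l = Fc (k+1) (m+1) (m+1) l := by
  unfold Fc
  rw [if_neg (show ¬ (m = m + 1) by omega), if_pos rfl, if_neg (show ¬ (l = k + 1) by omega)]
  simp only [Nat.add_right_cancel_iff]
  by_cases hlk : l = k
  · subst hlk
    simp only [if_true] at *
    have s1 := icho_symm ((m:ℤ) + l) (m+1)
    have s2 := icho_symm ((m:ℤ) + l) m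
    push_cast
    ring_nf at s1 s2 ⊢
    simp only [s1, s2]
    ring
  · simp only [if_neg hlk] at *
    have h3 := icho_pascal ((m:ℤ) + k-1) (k - 1) (by omega)
    have h4 := icho_pascal ((m:ℤ) + k-1) k (by omega)
    push_cast
    ring_nf at h3 h4 ⊢
    simp only [h3, h4]
    ring

theorem sumF (k l : ℕ) (hk : 1 ≤ k) (hl : l ≤ k) (m : ℕ) : ∀ j ≤ m,
    ∑ p ∈ range (m + 1), ∑ i ∈ range (p + 1), (if i ≤ j then Fc k p i l else 0) =
      if j < m then Fc (k+1) m j (l+1) else Fc (k+1) m j l := by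
  induction m with
  | zero =>
    intro j hj
    obtain rfl : j = 0 := by omega
    simp [Fc_m_zero k l hk, Fc_m_zero (k+1) l]
  | succ m ih =>
    have h1 : ∀ j ≤ m, ∑ i ∈ range (m + 1 + 1), (if i ≤ j then Fc k (m+1) i l else 0)
        = ∑ i ∈ range (j + 1), Fc k (m+1) i l := by
      intro j hj
      rw [← sum_filter]
      congr 1
      ext i; simp; omega
    have hA : ∀ j ≤ m, ∑ p ∈ range (m + 1 + 1), ∑ i ∈ range (p + 1), (if i ≤ j then Fc k p i l else 0) = Fc (k+1) (m+1) j (l+1) := by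
      intro j hj
      rw [sum_range_succ, ih j hj, h1 j hj]
      split_ifs with h
      · exact stepA k m j l hk h hl
      · obtain rfl : j = m := by omega
        exact stepB k j l hk hl
    intro j hj
    rcases Nat.lt_or_ge j (m+1) with h | h
    · rw [if_pos h]; exact hA j (by omega)
    · obtain rfl : j = m + 1 := by omega
      rw [if_neg (by omega), ← stepC k m l hk hl, ← hA m le_rfl, sum_range_succ, sum_range_succ _ (m+1),
        sum_range_succ _ (m+1), sum_range_succ _ (m+1), if_pos le_rfl, if_neg (by omega), add_zero, ← add_assoc]
      congr 2
      · refine sum_congr rfl fun p hp => sum_congr rfl fun i hi => ?_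
        simp at hp hi
        rw [if_pos (by omega), if_pos (by omega)]
      · refine sum_congr rfl fun i hi => ?_
        simp at hi
        rw [if_pos (by omega), if_pos (by omega)]

def RowOK {w : ℕ} (S : Finset (Fin w)) (r : Fin w → Option Bool) : Prop :=
  (∀ c, c ∉ S → r c = none) ∧ (∀ c c', r c = some false → c' < c → r c' = none) ∧
  (∀ c ∈ S, (∀ c', c < c' → r c' ≠ some false) → r c ≠ none)

def rCnt {w : ℕ} (b : Bool) (r : Fin w → Option Bool) : ℕ :=
  (Finset.univ.filter fun c : Fin w => r c = some b).card

theorem rCnt_update {w : ℕ} (r : Fin w → Option Bool) (a : Fin w) (x b : Bool) (h : r a = none) :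
    rCnt b (Function.update r a (some x)) = rCnt b r + if x = b then 1 else 0 := by
  unfold rCnt
  split_ifs with hx
  · subst hx
    rw [← Finset.card_insert_of_notMem (a := a) (by simp [h])]
    congr 1
    ext c
    by_cases hc : c = a
    · subst hc; simp
    · simp [hc]
  · rw [add_zero]
    congr 1
    ext c
    by_cases hc : c = a
    · subst hc; simp [h, hx]
    · simp [hc]

theorem row_lemma {R : Type*} [CommRing R] {w : ℕ} (S : Finset (Fin w)) : ∀ (f : ℕ → ℕ → R),
    ∑ r ∈ Finset.univ.filter (fun r : Fin w → Option Bool => RowOK S r),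
      f (rCnt true r) (rCnt false r) =
    ∑ t ∈ range (S.card + 1), f t (if t < S.card then 1 else 0) := by
  induction S using Finset.induction_on_max with
  | empty =>
    intro f
    have : Finset.univ.filter (fun r : Fin w → Option Bool => RowOK ∅ r) = {fun _ => none} := by
      ext r
      simp only [mem_filter, mem_univ, true_and, mem_singleton]
      constructor
      · intro h; ext1 c; exact h.1 c (by simp)
      · rintro rfl; simp [RowOK]
    rw [this]; simp [rCnt]
  | insert a S hS ih =>
    intro f
    have haS : a ∉ S := fun h => lt_irrefl _ (hS a h)
    have hset : Finset.univ.filter (fun r : Fin w → Option Bool => RowOK (insert a S) r) =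
        insert (Function.update (fun _ => none) a (some false))
          ((Finset.univ.filter (fun r : Fin w → Option Bool => RowOK S r)).image
            (fun r => Function.update r a (some true))) := by
      ext r
      simp only [mem_filter, mem_univ, true_and, mem_insert, mem_image]
      constructor
      · intro h
        have hgt : ∀ c, a < c → r c = none := by
          intro c hc
          apply h.1
          simp only [mem_insert, not_or]
          refine ⟨hc.ne', fun h' => lt_asymm hc (hS c h')⟩
        have hane : r a ≠ none := h.2.2 a (by simp) (fun c' hc' => by simp [hgt c' hc'])
        rcases hra : r a with _ | b
        · exact absurd hra hane
        cases b
        · left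
          ext1 c
          by_cases hc : c = a
          · subst hc; simp [hra]
          · simp only [Function.update_of_ne hc]
            rcases lt_or_gt_of_ne hc with hc | hc
            · exact h.2.1 a c hra hc
            · exact hgt c hc
        · right
          refine ⟨Function.update r a none, ⟨?_, ?_, ?_⟩, ?_⟩
          · intro c hc
            by_cases hca : c = a
            · subst hca; simp
            · simp only [Function.update_of_ne hca]
              exact h.1 c (by simp [hca, hc])
          · intro c c' hc hcc
            by_cases hca : c = a
            · subst hca; simp at hc
            · simp only [Function.update_of_ne hca] at hc
              by_cases hca' : c' = a
              · subst hca'; simp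
              · simp only [Function.update_of_ne hca']
                exact h.2.1 c c' hc hcc
          · intro c hc hh
            have hca : c ≠ a := fun e => haS (e ▸ hc)
            simp only [Function.update_of_ne hca]
            apply h.2.2 c (by simp [hc])
            intro c' hc'
            by_cases hca' : c' = a
            · subst hca'; simp [hra]
            · have := hh c' hc'
              simpa only [Function.update_of_ne hca'] using this
          · simp [← hra]
      · rintro (rfl | ⟨r, h, rfl⟩)
        · refine ⟨?_, ?_, ?_⟩
          · intro c hc
            simp only [mem_insert, not_or] at hc
            simp [hc.1]
          · intro c c' hc hcc
            by_cases hca : c = a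
            · subst hca; simp [hcc.ne]
            · simp [hca] at hc
          · intro c hc hh
            by_cases hca : c = a
            · subst hca; simp
            · exfalso
              simp [hca] at hc
              exact hh a (hS c hc) (by simp)
        · refine ⟨?_, ?_, ?_⟩
          · intro c hc
            simp only [mem_insert, not_or] at hc
            simp [hc.1, h.1 c hc.2]
          · intro c c' hc hcc
            by_cases hca : c = a
            · subst hca; simp at hc
            · simp only [Function.update_of_ne hca] at hc
              have hcS : c ∈ S := by
                by_contra hn
                rw [h.1 c hn] at hc; simp at hc
              have : c' ≠ a := (hcc.trans (hS c hcS)).ne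
              simp only [Function.update_of_ne this]
              exact h.2.1 c c' hc hcc
          · intro c hc hh
            by_cases hca : c = a
            · subst hca; simp
            · simp only [mem_insert, hca, false_or] at hc
              simp only [Function.update_of_ne hca]
              apply h.2.2 c hc
              intro c' hc'
              by_cases hca' : c' = a
              · subst hca'; simp [h.1 _ haS]
              · have := hh c' hc'
                simpa only [Function.update_of_ne hca'] using this
    rw [hset, sum_insert, sum_image]
    · rw [card_insert_of_notMem haS, sum_range_succ', add_comm]
      congr 1
      · have e : ∀ r ∈ Finset.univ.filter (fun r : Fin w → Option Bool => RowOK S r),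
          f (rCnt true (Function.update r a (some true))) (rCnt false (Function.update r a (some true)))
            = (fun x y => f (x+1) y) (rCnt true r) (rCnt false r) := by
          intro r hr
          simp only [mem_filter, mem_univ, true_and] at hr
          rw [rCnt_update _ _ _ _ (hr.1 a haS), rCnt_update _ _ _ _ (hr.1 a haS)]
          simp
        rw [sum_congr rfl e, ih (fun x y => f (x+1) y)]
        simp
      · rw [rCnt_update _ _ _ _ rfl, rCnt_update _ _ _ _ rfl]
        simp [rCnt]
    · intro r hr r' hr' he
      simp only [coe_filter, mem_univ, true_and, Set.mem_ofPred_eq] at hr hr'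
      ext1 c
      by_cases hca : c = a
      · subst hca; rw [hr.1 _ haS, hr'.1 _ haS]
      · have := congrFun he c
        simpa [hca] using this
    · simp only [mem_image, not_exists, not_and]
      intro r _ he
      have := congrFun he a
      simp at this

def ShapeOK {k w : ℕ} (pr : (Fin k → Fin (w + 1)) × (Fin k → Fin w → Option Bool)) : Prop :=
  (∀ i j : Fin k, i ≤ j → (pr.1 j : ℕ) ≤ (pr.1 i : ℕ)) ∧ (∀ i : Fin k, 1 ≤ (pr.1 i : ℕ)) ∧
    IsCCT k w (fun i => (pr.1 i : ℕ)) pr.2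

def topRow {k w : ℕ} (lam : Fin k → Fin (w + 1)) : ℕ := Finset.univ.sup fun i => (lam i : ℕ)

/-- free columns -/
def freeCols {k w : ℕ} (D : ℕ) (F : Fin k → Fin w → Option Bool) : Finset (Fin w) :=
  Finset.univ.filter fun c => (c : ℕ) < D ∧ ∀ i, F i c ≠ some true

theorem IsCCT_cons {k w : ℕ} (lam : Fin k → ℕ) (F : Fin k → Fin w → Option Bool) (D : ℕ)
    (r : Fin w → Option Bool) :
    IsCCT (k+1) w (Fin.cons D lam) (Fin.cons r F) ↔
      IsCCT k w lam F ∧ RowOK (freeCols D F) r := by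
  unfold IsCCT RowOK freeCols
  simp only [Fin.forall_fin_succ, Fin.cons_zero, Fin.cons_succ, Fin.succ_lt_succ_iff, mem_filter,
    mem_univ, true_and, Fin.not_lt_zero, lt_self_iff_false, Fin.succ_pos, false_imp_iff, 
    forall_true_left, not_and, not_forall, not_not, ne_eq, implies_true, and_true]
  constructor
  · rintro ⟨⟨a0, a1⟩, ⟨b0, b1⟩, c, ⟨d0, d1⟩⟩
    refine ⟨⟨a1, b1, ?_, ?_⟩, ?_, b0, ?_⟩
    · intro i i' c' h h'
      exact (c i).2 i' c' h h'
    · intro i c' h h2 h3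
      exact d1 i c' h h2 h3
    · intro c' hc'
      rcases lt_or_ge (c' : ℕ) D with h | h
      · obtain ⟨i, hi⟩ := hc' h
        exact (c i).1 c' hi
      · exact a0 c' h
    · intro c' hc' hh
      exact d0 c' hc'.1 hc'.2 (fun c'' h _ => hh c'' h)
  · rintro ⟨⟨a1, b1, c1, d1⟩, a0, b0, d0⟩
    refine ⟨⟨fun c h => a0 c fun h' => absurd h' (by omega), a1⟩, ⟨b0, b1⟩, ?_, ?_, d1⟩
    · intro i
      refine ⟨?_, ?_⟩
      · intro c h
        exact a0 c (fun _ => ⟨i, h⟩)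
      · intro i' c h h'
        exact c1 i i' c h h'
    · intro c hc hn hh
      refine d0 c ⟨hc, hn⟩ fun c' hc' => ?_
      rcases lt_or_ge (c' : ℕ) D with h | h
      · exact hh c' hc' h
      · rw [a0 c' (fun h' => absurd h' (by omega))]; simp

theorem aCount_cons {k w : ℕ} (F : Fin k → Fin w → Option Bool) (r : Fin w → Option Bool) :
    aCount (k+1) w (Fin.cons r F) = rCnt true r + aCount k w F := by
  simp only [aCount, rCnt, card_filter, Fintype.sum_prod_type, Fin.sum_univ_succ, Fin.cons_zero, Fin.cons_succ]

theorem bCount_cons {k w : ℕ} (F : Fin k → Fin w → Option Bool) (r : Fin w → Option Bool) :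
    bCount (k+1) w (Fin.cons r F) = rCnt false r + bCount k w F := by
  simp only [bCount, rCnt, card_filter, Fintype.sum_prod_type, Fin.sum_univ_succ, Fin.cons_zero, Fin.cons_succ]

theorem ShapeOK_cons {k w : ℕ} (lam : Fin k → Fin (w+1)) (F : Fin k → Fin w → Option Bool)
    (D : Fin (w+1)) (r : Fin w → Option Bool) :
    ShapeOK (k := k+1) (Fin.cons D lam, Fin.cons r F) ↔
      ShapeOK (lam, F) ∧ (1 ≤ (D:ℕ) ∧ topRow lam ≤ D) ∧ RowOK (freeCols D F) r := by
  unfold ShapeOK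
  have : (fun i => ((Fin.cons D lam : Fin (k+1) → Fin (w+1)) i : ℕ)) =
      Fin.cons (D : ℕ) (fun i => (lam i : ℕ)) := by
    ext i
    refine Fin.cases ?_ (fun i => ?_) i <;> simp
  simp only [this, IsCCT_cons]
  simp only [Fin.forall_fin_succ, Fin.cons_zero, Fin.cons_succ, topRow, Finset.sup_le_iff, mem_univ,
    Fin.succ_le_succ_iff, Fin.zero_le, le_refl, forall_true_left, true_and]
  constructor
  · rintro ⟨⟨h1, h2⟩, ⟨h3, h4⟩, h5, h6⟩
    exact ⟨⟨fun i j h => (h2 i).2 j h, h4, h5⟩, ⟨h3, fun i => h1 i⟩, h6⟩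
  · rintro ⟨⟨h2, h4, h5⟩, ⟨h3, h1⟩, h6⟩
    refine ⟨⟨fun i => h1 i, fun i => ⟨?_, fun j h => h2 i j h⟩⟩, ⟨h3, h4⟩, h5, h6⟩
    intro h
    exact absurd h (by simp)

theorem topRow_cons {k w : ℕ} (lam : Fin k → Fin (w+1)) (D : Fin (w+1)) (h : topRow lam ≤ D) :
    topRow (Fin.cons D lam : Fin (k+1) → Fin (w+1)) = D := by
  unfold topRow at *
  apply le_antisymm
  · rw [Finset.sup_le_iff] at *
    intro i _
    refine Fin.cases ?_ (fun i => ?_) i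
    · simp
    · simpa using h i (mem_univ _)
  · exact Finset.le_sup (f := fun i => ((Fin.cons D lam : Fin (k+1) → Fin (w+1)) i : ℕ)) (mem_univ 0)

theorem card_freeCols {k w : ℕ} (lam : Fin k → Fin (w+1)) (F : Fin k → Fin w → Option Bool)
    (h : ShapeOK (lam, F)) (D : ℕ) (hD : topRow lam ≤ D) (hw : D ≤ w) :
    (freeCols D F).card + aCount k w F = D := by
  obtain ⟨-, -, h1, -, h3, -⟩ := h
  simp only at h1 h3
  have e : aCount k w F = (Finset.univ.filter fun c : Fin w => (c : ℕ) < D ∧ ¬ ∀ i, F i c ≠ some true).card := by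
    unfold aCount
    refine Finset.card_bij (fun p _ => p.2) ?_ ?_ ?_
    · rintro ⟨i, c⟩ hp
      simp only [mem_filter, mem_univ, true_and] at hp ⊢
      refine ⟨?_, fun hh => hh i hp⟩
      by_contra hc
      have : (lam i : ℕ) ≤ D := le_trans (Finset.le_sup (f := fun i => (lam i : ℕ)) (mem_univ i)) hD
      rw [h1 i c (by omega)] at hp
      simp at hp
    · rintro ⟨i, c⟩ hp ⟨i', c'⟩ hp' he
      simp only [mem_filter, mem_univ, true_and] at hp hp' he
      subst he
      rcases lt_trichotomy i i' with hl | rfl | hl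
      · rw [h3 i' i c hp' hl] at hp; simp at hp
      · rfl
      · rw [h3 i i' c hp hl] at hp'; simp at hp'
    · intro c hc
      simp only [mem_filter, mem_univ, true_and, not_forall, not_not, ne_eq] at hc
      obtain ⟨i, hi⟩ := hc.2
      exact ⟨(i, c), by simpa using hi, rfl⟩
  rw [e, freeCols, ← filter_filter, ← filter_filter, Finset.card_filter_add_card_filter_not]
  rw [Fin.card_filter_val_lt]
  omega

theorem peel {R : Type*} [CommRing R] (k w : ℕ) (f : ℕ → ℕ → ℕ → R) :
    ∑ pr ∈ Finset.univ.filter (fun pr : (Fin (k+1) → Fin (w + 1)) × (Fin (k+1) → Fin w → Option Bool) => ShapeOK pr),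
      f (topRow pr.1) (aCount _ w pr.2) (bCount _ w pr.2) =
    ∑ pr ∈ Finset.univ.filter (fun pr : (Fin k → Fin (w + 1)) × (Fin k → Fin w → Option Bool) => ShapeOK pr),
      ∑ D ∈ range (w+1), if 1 ≤ D ∧ topRow pr.1 ≤ D then
        ∑ j ∈ range (D+1), if aCount _ w pr.2 ≤ j then f D j (bCount _ w pr.2 + if j < D then 1 else 0) else 0
        else 0 := by
  have step1 : ∑ pr ∈ Finset.univ.filter (fun pr : (Fin (k+1) → Fin (w + 1)) × (Fin (k+1) → Fin w → Option Bool) => ShapeOK pr),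
      f (topRow pr.1) (aCount _ w pr.2) (bCount _ w pr.2) =
    ∑ q ∈ Finset.univ.filter (fun q : ((Fin k → Fin (w + 1)) × (Fin k → Fin w → Option Bool)) × (Fin (w+1) × (Fin w → Option Bool)) => 
      ShapeOK q.1 ∧ (1 ≤ (q.2.1:ℕ) ∧ topRow q.1.1 ≤ q.2.1) ∧ RowOK (freeCols q.2.1 q.1.2) q.2.2),
      f q.2.1 (rCnt true q.2.2 + aCount _ w q.1.2) (rCnt false q.2.2 + bCount _ w q.1.2) := by
    symm
    refine Finset.sum_nbij' (fun q => (Fin.cons q.2.1 q.1.1, Fin.cons q.2.2 q.1.2))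
      (fun pr => ((Fin.tail pr.1, Fin.tail pr.2), (pr.1 0, pr.2 0))) ?_ ?_ ?_ ?_ ?_
    · rintro ⟨⟨lam, F⟩, ⟨D, r⟩⟩ h
      simp only [mem_filter, mem_univ, true_and] at h ⊢
      exact (ShapeOK_cons _ _ _ _).2 h
    · rintro ⟨lam, F⟩ h
      simp only [mem_filter, mem_univ, true_and] at h ⊢
      rw [← ShapeOK_cons, Fin.cons_self_tail, Fin.cons_self_tail]
      exact h
    · rintro ⟨⟨lam, F⟩, ⟨D, r⟩⟩ h
      simp
    · rintro ⟨lam, F⟩ h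
      simp
    · rintro ⟨⟨lam, F⟩, ⟨D, r⟩⟩ h
      simp only [mem_filter, mem_univ, true_and] at h ⊢
      rw [topRow_cons _ _ h.2.1.2, aCount_cons, bCount_cons]
  rw [step1, Finset.sum_filter, Fintype.sum_prod_type, Finset.sum_filter]
  refine sum_congr rfl fun pr _ => ?_
  by_cases hpr : ShapeOK pr
  swap
  · simp [hpr]
  simp only [hpr, true_and, if_true]
  rw [Fintype.sum_prod_type, Finset.sum_range]
  refine sum_congr rfl fun D _ => ?_
  by_cases hD : 1 ≤ (D:ℕ) ∧ topRow pr.1 ≤ D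
  swap
  · simp [hD]
  simp only [hD, true_and, if_true, and_self]
  rw [← Finset.sum_filter]
  have := row_lemma (freeCols D pr.2) (fun x y => f D (x + aCount _ w pr.2) (y + bCount _ w pr.2))
  rw [this]
  have hc := card_freeCols pr.1 pr.2 hpr D hD.2 (by omega)
  rw [← Finset.sum_filter]
  refine Finset.sum_nbij' (fun t => t + aCount _ w pr.2) (fun j => j - aCount _ w pr.2) ?_ ?_ ?_ ?_ ?_
  · intro t ht; simp at ht ⊢; omega
  · intro t ht; simp at ht ⊢; omega
  · intro t ht; simp
  · intro t ht; simp at ht ⊢; omega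
  · intro t ht
    simp at ht ⊢
    congr 1
    rw [add_comm]
    congr 1
    split_ifs <;> omega

theorem gen {R : Type*} [CommRing R] (w : ℕ) : ∀ (k : ℕ) (f : ℕ → ℕ → ℕ → R),
    ∑ pr ∈ Finset.univ.filter (fun pr : (Fin (k+1) → Fin (w + 1)) × (Fin (k+1) → Fin w → Option Bool) => ShapeOK pr),
      f (topRow pr.1) (aCount _ w pr.2) (bCount _ w pr.2) =
    ∑ D ∈ range (w+1), ∑ j ∈ range (D+1), ∑ l ∈ range (k+2), (Fc (k+1) D j l : R) * f D j l := by
  intro k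
  induction k with
  | zero =>
    intro f
    rw [peel]
    have : Finset.univ.filter (fun pr : (Fin 0 → Fin (w + 1)) × (Fin 0 → Fin w → Option Bool) => ShapeOK pr) = {(fun i => i.elim0, fun i => i.elim0)} := by
      ext pr
      simp only [mem_filter, mem_univ, true_and, mem_singleton]
      refine ⟨fun _ => Subsingleton.elim _ _, fun _ => ?_⟩
      simp [ShapeOK, IsCCT]
    rw [this, sum_singleton]
    refine sum_congr rfl fun D hD => ?_
    have e1 : topRow (fun i => i.elim0 : Fin 0 → Fin (w + 1)) = 0 := by
      simp [topRow]
    have e2 : aCount 0 w (fun i => i.elim0 : Fin 0 → Fin w → Option Bool) = 0 := by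
      simp [aCount]
    have e3 : bCount 0 w (fun i => i.elim0 : Fin 0 → Fin w → Option Bool) = 0 := by
      simp [bCount]
    simp only [e1, e2, e3]
    rcases Nat.eq_zero_or_pos D with rfl | hD0
    · simp [Fc_m_zero]
    rw [if_pos ⟨hD0, by omega⟩]
    refine sum_congr rfl fun j hj => ?_
    simp only [mem_range] at hj
    rw [if_pos (by omega)]
    rw [sum_range_succ, sum_range_one]
    rcases Nat.lt_or_ge j D with h | h
    · have : Fc (0+1) D j 1 = 1 := by
        unfold Fc
        rw [if_neg (show ¬ j = D by omega), if_pos (by omega), icho_one _ ((D:ℤ) - 1) (by omega) (by push_cast; omega),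
          icho_one _ (((0 + 1 : ℕ) : ℤ) - 1) (by push_cast; omega) (Or.inl (by simp)), icho_zero _ (D : ℤ) (by push_cast; omega)]
        ring
      rw [Fc_l_zero _ _ _ (by omega) h, this, if_pos h]; simp
    · obtain rfl : j = D := by omega
      have : Fc (0+1) j j 0 = 1 := by
        unfold Fc
        rw [if_pos rfl, if_neg (show ¬ 0 = 0 + 1 by omega), icho_one _ ((j:ℤ) - 1) (by omega) (by push_cast; omega),
          icho_one _ (((0 + 1 : ℕ) : ℤ) - 1) (by push_cast; omega) (Or.inl (by simp)), icho_zero _ (j : ℤ) (by push_cast; omega)]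
        ring
      have h2 := Fc_diag (0+1) j
      simp only [zero_add] at h2 this ⊢
      rw [h2, this]; simp
  | succ k ih =>
    intro f
    rw [peel]
    have := ih (fun D1 j1 l1 => ∑ D ∈ range (w+1), if 1 ≤ D ∧ D1 ≤ D then
        ∑ j ∈ range (D+1), if j1 ≤ j then f D j (l1 + if j < D then 1 else 0) else 0
        else 0)
    rw [this]
    clear this ih
    -- drop the positivity condition
    have hpos : ∀ D1 ∈ range (w+1), ∀ j1 ∈ range (D1+1), ∀ l1 ∈ range (k+2),
        (Fc (k+1) D1 j1 l1 : R) * (∑ D ∈ range (w+1), if 1 ≤ D ∧ D1 ≤ D then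
        ∑ j ∈ range (D+1), if j1 ≤ j then f D j (l1 + if j < D then 1 else 0) else 0
        else 0) = ∑ D ∈ range (w+1), if D1 ≤ D then
          ∑ j ∈ range (D+1), (if j1 ≤ j then (Fc (k+1) D1 j1 l1 : R) else 0) * f D j (l1 + if j < D then 1 else 0) else 0 := by
      intro D1 _ j1 hj1 l1 _
      rw [mul_sum]
      refine sum_congr rfl fun D _ => ?_
      by_cases hD1 : D1 = 0
      · subst hD1
        simp only [zero_add, range_one, mem_singleton] at hj1
        subst hj1
        simp [Fc_m_zero]
      · by_cases hd : D1 ≤ D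
        · rw [if_pos ⟨by omega, hd⟩, if_pos hd, mul_sum]
          refine sum_congr rfl fun j _ => ?_
          split_ifs <;> simp
        · rw [if_neg (by tauto), if_neg hd, mul_zero]
    rw [sum_congr rfl fun D1 h1 => sum_congr rfl fun j1 h2 => sum_congr rfl fun l1 h3 => hpos D1 h1 j1 h2 l1 h3]
    -- bring D outermost
    have hsw : ∀ G : ℕ → ℕ → ℕ → ℕ → R,
      (∑ D1 ∈ range (w+1), ∑ j1 ∈ range (D1+1), ∑ l1 ∈ range (k+2), ∑ D ∈ range (w+1), if D1 ≤ D then G D1 j1 l1 D else 0)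
       = ∑ D ∈ range (w+1), ∑ l1 ∈ range (k+2), ∑ D1 ∈ range (D+1), ∑ j1 ∈ range (D1+1), G D1 j1 l1 D := by
      intro G
      have a1 : ∀ D1 ∈ range (w+1), (∑ j1 ∈ range (D1+1), ∑ l1 ∈ range (k+2), ∑ D ∈ range (w+1), if D1 ≤ D then G D1 j1 l1 D else 0) =
         ∑ D ∈ range (w+1), if D1 ≤ D then ∑ l1 ∈ range (k+2), ∑ j1 ∈ range (D1+1), G D1 j1 l1 D else 0 := by
        intro D1 _
        rw [sum_congr rfl fun j1 _ => sum_comm, sum_comm]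
        refine sum_congr rfl fun D _ => ?_
        rw [sum_comm]
        split_ifs <;> simp
      rw [sum_congr rfl a1, sum_comm]
      refine sum_congr rfl fun D hD => ?_
      rw [← sum_filter, sum_comm (s := range (k+2))]
      congr 1
      ext x; simp at hD ⊢; omega
    rw [hsw]
    refine sum_congr rfl fun D hD => ?_
    have hsw2 : ∀ l1 ∈ range (k+2), ∑ D1 ∈ range (D+1), ∑ j1 ∈ range (D1+1), 
        ∑ j ∈ range (D+1), (if j1 ≤ j then (Fc (k+1) D1 j1 l1 : R) else 0) * f D j (l1 + if j < D then 1 else 0)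
        = ∑ j ∈ range (D+1), ((if j < D then Fc (k+2) D j (l1+1) else Fc (k+2) D j l1 : ℤ) : R) * f D j (l1 + if j < D then 1 else 0) := by
      intro l1 hl1
      rw [sum_congr rfl fun D1 _ => sum_comm, sum_comm]
      refine sum_congr rfl fun j hj => ?_
      simp only [mem_range] at hj hl1
      rw [← sumF (k+1) l1 (by omega) (by omega) D j (by omega)]
      push_cast
      simp only [sum_mul]
    rw [sum_congr rfl hsw2, sum_comm]
    refine sum_congr rfl fun j hj => ?_
    simp only [mem_range] at hj
    rcases Nat.lt_or_ge j D with h | h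
    · simp only [h, if_true]
      rw [sum_range_succ' _ (k+2), Fc_l_zero _ _ _ (by omega) h]
      simp
    · obtain rfl : j = D := by omega
      simp only [lt_self_iff_false, if_false, add_zero]
      rw [sum_range_succ _ (k+2), Fc_diag]
      simp

/-- `N'_{m,k}(α,β)`, the weight generating function of Condensed Catalan tableaux of
size `(k, k+m)` whose shape has first row exactly `m` and exactly `k` nonzero rows,
equals the α/β-Narayana expression of Theorem 5.1. Here a tableau is a pair
`(shape, filling)` and its weight is `α^(k+j) β^(m+ℓ)` where `j, ℓ` are the numbers
of α's and β's in the filling; `α = X 0`, `β = X 1` in `ℤ[α,β]`. -/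
theorem stmt4 (m k : ℕ) (hm : 1 ≤ m) (hk : 1 ≤ k) :
    ∑ pr ∈ Finset.univ.filter
        (fun pr : (Fin k → Fin (m + 1)) × (Fin k → Fin m → Option Bool) =>
          (∀ i j : Fin k, i ≤ j → (pr.1 j : ℕ) ≤ (pr.1 i : ℕ)) ∧
          (pr.1 ⟨0, hk⟩ : ℕ) = m ∧
          (∀ i : Fin k, 1 ≤ (pr.1 i : ℕ)) ∧
          IsCCT k m (fun i => (pr.1 i : ℕ)) pr.2),
        (MvPolynomial.X 0 : MvPolynomial (Fin 2) ℤ) ^ (k + aCount k m pr.2) *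
          MvPolynomial.X 1 ^ (m + bCount k m pr.2)
      = MvPolynomial.X 0 ^ k * MvPolynomial.X 1 ^ m *
        ∑ l ∈ Finset.range (k + 1), ∑ j ∈ Finset.range (m + 1),
          MvPolynomial.X 0 ^ j * MvPolynomial.X 1 ^ l *
          ((icho ((m : ℤ) + (l : ℤ) - 2 + (if j = m then 1 else 0)) ((m : ℤ) - 1) *
              icho ((k : ℤ) + (j : ℤ) - 2 + (if l = k then 1 else 0)) ((k : ℤ) - 1) -
            icho ((m : ℤ) + (l : ℤ) - 2 + (if j = m then 1 else 0)) (m : ℤ) *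
              icho ((k : ℤ) + (j : ℤ) - 2 + (if l = k then 1 else 0)) (k : ℤ) : ℤ) :
            MvPolynomial (Fin 2) ℤ) := by
  obtain ⟨K, rfl⟩ : ∃ K, k = K + 1 := ⟨k - 1, by omega⟩
  have hg := gen (R := MvPolynomial (Fin 2) ℤ) m K (fun D j l => if D = m then
    (MvPolynomial.X 0 : MvPolynomial (Fin 2) ℤ) ^ (K + 1 + j) * MvPolynomial.X 1 ^ (m + l) else 0)
  have htop : ∀ pr : (Fin (K+1) → Fin (m + 1)) × (Fin (K+1) → Fin m → Option Bool),
      ShapeOK pr → topRow pr.1 = pr.1 ⟨0, hk⟩ := by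
    intro pr h
    apply le_antisymm
    · apply Finset.sup_le
      intro i _
      exact h.1 ⟨0, hk⟩ i (Fin.zero_le i)
    · exact Finset.le_sup (f := fun i => (pr.1 i : ℕ)) (mem_univ _)
  have hL : ∀ pr ∈ Finset.univ.filter (fun pr : (Fin (K+1) → Fin (m + 1)) × (Fin (K+1) → Fin m → Option Bool) => ShapeOK pr),
      (if topRow pr.1 = m then (MvPolynomial.X 0 : MvPolynomial (Fin 2) ℤ) ^ (K + 1 + aCount _ m pr.2) *
        MvPolynomial.X 1 ^ (m + bCount _ m pr.2) else 0) =
      (if (pr.1 ⟨0, hk⟩ : ℕ) = m then (MvPolynomial.X 0 : MvPolynomial (Fin 2) ℤ) ^ (K + 1 + aCount _ m pr.2) *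
        MvPolynomial.X 1 ^ (m + bCount _ m pr.2) else 0) := by
    intro pr h
    rw [htop pr (by simpa using h)]
  rw [sum_congr rfl hL, ← sum_filter, filter_filter] at hg
  trans
  · refine Eq.trans (sum_congr ?_ fun _ _ => rfl) hg
    ext pr
    simp only [mem_filter, mem_univ, true_and]
    unfold ShapeOK
    tauto
  · rw [sum_eq_single_of_mem m (by simp)]
    · simp only [if_true]
      rw [sum_comm, mul_sum]
      refine sum_congr rfl fun l _ => ?_
      rw [mul_sum]
      refine sum_congr rfl fun j _ => ?_
      simp only [Fc]
      push_cast
      ring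
    · intro D _ hD
      simp [hD]
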